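/- arXiv:2502.09751 — 2 statements merged into one kernel-verified Lean document; each statement's English description precedes it below -/
import Mathlib

section
/- For natural numbers t and r with t < r, the t-th homotopy group of the r-dimensional sphere S^r (the unit sphere in (r+1)-dimensional Euclidean space, based at any point) is trivial, i.e., π_t(S^r) has exactly one element. -/
open scoped Topology

/-!
The proof deforms a based map `f` from the cube `I^t` to the sphere, relative to the boundary of
the cube, to a map that misses a point `p` other than the base point `x`. The complement of `p` is
homeomorphic to a vector space by stereographic projection, so a straight-line homotopy there
contracts the deformed map to `x` (`SphereHomotopy.homotopicRel_const_of_ne`).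

To find the deformation, Stone-Weierstrass approximates the coordinates of `f - x` within `ε` by
restrictions of `C¹` functions on `ℝ^t`. A soft threshold `v ↦ v - max (-ε) (min v ε)` in each
coordinate makes the approximation vanish wherever `f = x`, at the cost of another `ε`, and keeps it
locally Lipschitz (`SphereHomotopy.exists_approx`). Let `w : ℝ^t → ℝ^{r+1}` be `x` plus the result.
As `w` stays within distance `1` of `f`, the segment from `f` to `w` avoids the origin, and
normalizing it gives a homotopy from `f` to `w / ‖w‖` relative to the boundary
(`SphereHomotopy.exists_homotopicRel_normalize`). The cone `{s • w y}` is a locally Lipschitz image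
of `ℝ^{t+1}`, so its Hausdorff dimension is at most `t + 1 < r + 1`; hence some direction is not in
the range of `w / ‖w‖` (`SphereHomotopy.exists_forall_smul_ne`).
-/

namespace SphereHomotopy

open Set unitInterval

/-- The coordinatewise soft threshold, which moves each coordinate by at most `ε` towards `0` and
sends coordinates in `[-ε, ε]` to `0`. -/
def threshold {n : ℕ} (ε : ℝ) (v : Fin n → ℝ) : Fin n → ℝ :=
  fun i => v i - max (-ε) (min (v i) ε)

lemma locallyLipschitz_threshold {n : ℕ} (ε : ℝ) :
    LocallyLipschitz (threshold ε : (Fin n → ℝ) → Fin n → ℝ) := by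
  have h : LipschitzWith 2 (threshold ε : (Fin n → ℝ) → Fin n → ℝ) := by
    refine LipschitzWith.of_dist_le_mul fun v w => ?_
    refine (dist_pi_le_iff (by positivity)).2 fun i => ?_
    have h1 : |v i - w i| ≤ dist v w := by
      simpa [Real.dist_eq] using dist_le_pi_dist v w i
    have h2 : |max (-ε) (min (v i) ε) - max (-ε) (min (w i) ε)| ≤ |v i - w i| := by
      refine (abs_max_sub_max_le_max _ _ _ _).trans ?_
      rw [sub_self, abs_zero, max_eq_right (abs_nonneg _)]
      refine (abs_min_sub_min_le_max _ _ _ _).trans ?_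
      simp
    rw [Real.dist_eq]
    have h3 : threshold ε v i - threshold ε w i
        = (v i - w i) - (max (-ε) (min (v i) ε) - max (-ε) (min (w i) ε)) := by
      simp only [threshold]; ring
    rw [h3]
    refine (abs_sub _ _).trans ?_
    push_cast
    linarith
  exact h.locallyLipschitz

/-- The algebra of functions on the cube that extend to `C¹` functions on `ℝ^t`. -/
def contDiffSubalgebra (t : ℕ) : Subalgebra ℝ C(Fin t → I, ℝ) where
  carrier := {f | ∃ F : (Fin t → ℝ) → ℝ, ContDiff ℝ 1 F ∧ ∀ y, f y = F fun i => (y i : ℝ)}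
  mul_mem' := by
    rintro f g ⟨F, hF, hf⟩ ⟨G, hG, hg⟩
    exact ⟨fun y => F y * G y, hF.mul hG, fun y => by simp [hf, hg]⟩
  add_mem' := by
    rintro f g ⟨F, hF, hf⟩ ⟨G, hG, hg⟩
    exact ⟨fun y => F y + G y, hF.add hG, fun y => by simp [hf, hg]⟩
  algebraMap_mem' c := ⟨fun _ => c, contDiff_const, fun y => by simp⟩

lemma contDiffSubalgebra_separatesPoints (t : ℕ) : (contDiffSubalgebra t).SeparatesPoints := by
  intro y z hyz
  obtain ⟨i, hi⟩ := Function.ne_iff.1 hyz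
  refine ⟨fun y => (y i : ℝ), ⟨⟨fun y => (y i : ℝ), by fun_prop⟩,
    ⟨fun y => y i, by fun_prop, fun _ => rfl⟩, rfl⟩, ?_⟩
  exact fun h => hi (Subtype.ext h)

/-- A continuous map on the cube is uniformly close to a thresholded `C¹` map that vanishes wherever
the original map does. -/
lemma exists_approx {t n : ℕ} (u : C(Fin t → I, Fin n → ℝ)) {δ : ℝ} (hδ : 0 < δ) :
    ∃ (F : (Fin t → ℝ) → Fin n → ℝ) (ε : ℝ), ContDiff ℝ 1 F ∧
      (∀ y : Fin t → I, u y = 0 → threshold ε (F fun i => (y i : ℝ)) = 0) ∧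
      ∀ (y : Fin t → I) (i : Fin n), |threshold ε (F fun i => (y i : ℝ)) i - u y i| < δ := by
  have key : ∀ i : Fin n, ∃ F : (Fin t → ℝ) → ℝ, ContDiff ℝ 1 F ∧
      ∀ y : Fin t → I, |F (fun i => (y i : ℝ)) - u y i| < δ / 2 := by
    intro i
    obtain ⟨⟨g, F, hF, hg⟩, h⟩ :=
      ContinuousMap.exists_mem_subalgebra_near_continuous_of_separatesPoints
        (contDiffSubalgebra t) (contDiffSubalgebra_separatesPoints t) (fun y => u y i)
        (by fun_prop) (δ / 2) (by positivity)
    refine ⟨F, hF, fun y => ?_⟩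
    rw [← hg]
    exact h y
  choose F hF hFu using key
  refine ⟨fun y i => F i y, δ / 2, contDiff_pi.2 hF, fun y hy => ?_, fun y i => ?_⟩
  · ext i
    have := abs_lt.1 (hFu i y)
    simp only [hy, Pi.zero_apply, sub_zero] at this
    simp only [threshold, Pi.zero_apply]
    rw [min_eq_left this.2.le, max_eq_right this.1.le, sub_self]
  · have := abs_lt.1 (hFu i y)
    simp only [threshold]
    have h1 : max (-(δ / 2)) (min (F i fun i => (y i : ℝ)) (δ / 2)) ≤ δ / 2 :=
      max_le (by linarith) (min_le_right _ _)
    have h2 := le_max_left (-(δ / 2)) (min (F i fun i => (y i : ℝ)) (δ / 2))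
    rw [abs_lt]
    constructor <;> linarith

/-- The cone over the translate by `x` of a thresholded `C¹` image of `ℝ^t`, together with the
line `ℝ x`,
misses a vector of `ℝ^{r+1}` when `t < r`. -/
lemma exists_forall_smul_ne {t r : ℕ} (h : t < r) (x : EuclideanSpace ℝ (Fin (r + 1)))
    {F : (Fin t → ℝ) → Fin (r + 1) → ℝ} (hF : ContDiff ℝ 1 F) (ε : ℝ) :
    ∃ p : EuclideanSpace ℝ (Fin (r + 1)), (∀ s : ℝ, p ≠ s • x) ∧
      ∀ (s : ℝ) (y : Fin t → ℝ), p ≠ s • (x + WithLp.toLp 2 (threshold ε (F y))) := by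
  let Ψ : ℝ × (Fin (r + 1) → ℝ) → EuclideanSpace ℝ (Fin (r + 1)) :=
    fun q => q.1 • (x + WithLp.toLp 2 q.2)
  have hΨ : ContDiff ℝ 1 Ψ := by
    have : ContDiff ℝ 1 (fun v : Fin (r + 1) → ℝ =>
        (WithLp.toLp 2 v : EuclideanSpace ℝ (Fin (r + 1)))) :=
      (EuclideanSpace.equiv (Fin (r + 1)) ℝ).symm.contDiff
    exact contDiff_fst.smul (contDiff_const.add (this.comp contDiff_snd))
  let Φ : ℝ × (Fin t → ℝ) → EuclideanSpace ℝ (Fin (r + 1)) :=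
    fun q => Ψ (q.1, threshold ε (F q.2))
  have hΦ : LocallyLipschitz Φ :=
    hΨ.locallyLipschitz.comp
      (LipschitzWith.prod_fst.locallyLipschitz.prodMk
        ((locallyLipschitz_threshold ε).comp
          (hF.locallyLipschitz.comp LipschitzWith.prod_snd.locallyLipschitz)))
  have d1 : dimH (range Φ) ≤ (t + 1 : ℕ) := by
    refine (dimH_range_le_of_locally_lipschitzOn hΦ).trans ?_
    rw [Real.dimH_univ_eq_finrank]
    simp [add_comm]
  have d2 : dimH (range fun s : ℝ => s • x) ≤ (t + 1 : ℕ) := by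
    refine (ContDiff.dimH_range_le (by fun_prop)).trans ?_
    simp
  have d : dimH (range Φ ∪ range fun s : ℝ => s • x)
      < Module.finrank ℝ (EuclideanSpace ℝ (Fin (r + 1))) := by
    rw [dimH_union, finrank_euclideanSpace_fin]
    refine (max_le d1 d2).trans_lt ?_
    exact_mod_cast Nat.succ_lt_succ h
  obtain ⟨p, hp⟩ := (dense_compl_of_dimH_lt_finrank d).nonempty
  refine ⟨p, fun s hs => hp (Or.inr ⟨s, hs.symm⟩), fun s y hs => hp (Or.inl ⟨(s, y), hs.symm⟩)⟩

section Homotopies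

variable {E : Type*} [NormedAddCommGroup E] [InnerProductSpace ℝ E]
  {Y : Type*} [TopologicalSpace Y]

/-- Radial projection of a nowhere vanishing map to the unit sphere. -/
noncomputable def normalize (w : C(Y, E)) (hw : ∀ y, w y ≠ 0) : C(Y, Metric.sphere (0 : E) 1) where
  toFun y := ⟨‖w y‖⁻¹ • w y, by simp [norm_smul, hw y]⟩
  continuous_toFun := by
    refine Continuous.subtype_mk ?_ _
    exact (w.continuous.norm.inv₀ fun y => norm_ne_zero_iff.2 (hw y)).smul w.continuous

/-- The normalized straight-line homotopy from a map `f` to the sphere to a map `w` at distance less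
than `1`; it is stationary where `w = f`. -/
lemma exists_homotopicRel_normalize (f : C(Y, Metric.sphere (0 : E) 1)) (w : C(Y, E))
    (hfw : ∀ y, ‖w y - f y‖ < 1) (S : Set Y) (hS : ∀ y ∈ S, w y = f y) :
    ∃ hw : ∀ y, w y ≠ 0, f.HomotopicRel (normalize w hw) S := by
  have hL : ∀ q : I × Y, (f q.2 : E) + (q.1 : ℝ) • (w q.2 - f q.2) ≠ 0 := by
    rintro ⟨s, y⟩ h0
    have h1 : ‖(f y : E)‖ = 1 := norm_eq_of_mem_sphere (f y)
    have h2 : (f y : E) = -((s : ℝ) • (w y - f y)) := eq_neg_of_add_eq_zero_left h0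
    rw [h2, norm_neg, norm_smul, Real.norm_of_nonneg s.2.1] at h1
    have := mul_le_of_le_one_left (norm_nonneg (w y - f y)) s.2.2
    linarith [hfw y]
  have hw : ∀ y, w y ≠ 0 := fun y => by simpa using hL (1, y)
  let H : C(I × Y, Metric.sphere (0 : E) 1) := normalize
    ⟨fun q : I × Y => (f q.2 : E) + (q.1 : ℝ) • (w q.2 - f q.2), by fun_prop⟩ hL
  refine ⟨hw, ⟨{ toContinuousMap := H
                 map_zero_left := fun y => ?_
                 map_one_left := fun y => ?_
                 prop' := fun s y hy => ?_ }⟩⟩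
  · ext1
    simp [H, normalize]
  · ext1
    simp [H, normalize, -smul_add]
  · ext1
    simp [H, normalize, hS y hy]

/-- A map to the sphere that misses a point `p` contracts to any `x ≠ p`, by the straight-line
homotopy in the stereographic chart at `p`, which is stationary where the map takes the value
`x`. -/
lemma homotopicRel_const_of_ne (g : C(Y, Metric.sphere (0 : E) 1)) (p x : Metric.sphere (0 : E) 1)
    (hg : ∀ y, g y ≠ p) (hx : x ≠ p) (S : Set Y) (hS : ∀ y ∈ S, g y = x) :
    g.HomotopicRel (ContinuousMap.const Y x) S := by
  let φ := stereographic (norm_eq_of_mem_sphere p)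
  have hmem : ∀ z : Metric.sphere (0 : E) 1, z ≠ p → z ∈ φ.source := fun z hz => by
    simpa [φ] using hz
  have hφg : Continuous fun y => φ (g y) :=
    φ.continuousOn.comp_continuous g.continuous fun y => hmem _ (hg y)
  have hφs : Continuous φ.symm := by
    rw [← continuousOn_univ]
    exact φ.continuousOn_symm
  refine ⟨{ toFun := fun q : I × Y => φ.symm (φ (g q.2) + (q.1 : ℝ) • (φ x - φ (g q.2)))
            continuous_toFun := hφs.comp ((hφg.comp continuous_snd).add
              ((continuous_subtype_val.comp continuous_fst).smul
                (continuous_const.sub (hφg.comp continuous_snd))))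
            map_zero_left := fun y => ?_
            map_one_left := fun y => ?_
            prop' := fun s y hy => ?_ }⟩
  · simp [φ.left_inv (hmem _ (hg y))]
  · simp [φ.left_inv (hmem _ hx)]
  · simp [hS y hy, φ.left_inv (hmem _ hx)]

end Homotopies

lemma homotopic_const {t r : ℕ} (h : t < r)
    (x : Metric.sphere (0 : EuclideanSpace ℝ (Fin (r + 1))) 1)
    (f : GenLoop (Fin t) (Metric.sphere (0 : EuclideanSpace ℝ (Fin (r + 1))) 1) x) :
    GenLoop.Homotopic f GenLoop.const := by
  -- `δ` converts closeness of coordinates into closeness in the Euclidean norm.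
  obtain ⟨δ, hδ, hδ'⟩ : ∃ δ > 0, ∀ v : Fin (r + 1) → ℝ, (∀ i, |v i| < δ) →
      ‖(WithLp.toLp 2 v : EuclideanSpace ℝ (Fin (r + 1)))‖ < 1 := by
    have hc : Continuous fun v : Fin (r + 1) → ℝ =>
        (WithLp.toLp 2 v : EuclideanSpace ℝ (Fin (r + 1))) := by fun_prop
    obtain ⟨δ, hδ, H⟩ := Metric.continuous_iff.1 hc 0 1 one_pos
    refine ⟨δ, hδ, fun v hv => ?_⟩
    have := H v ((dist_pi_lt_iff hδ).2 fun i => by simpa [Real.dist_eq] using hv i)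
    simpa using this
  obtain ⟨F, ε, hF, hF0, hFu⟩ := exists_approx
    (⟨fun y i => (f.1 y : EuclideanSpace ℝ (Fin (r + 1))) i
        - (x : EuclideanSpace ℝ (Fin (r + 1))) i, by fun_prop⟩ :
      C(Fin t → I, Fin (r + 1) → ℝ)) hδ
  have hcont : Continuous fun y : Fin t → I => (x : EuclideanSpace ℝ (Fin (r + 1)))
      + WithLp.toLp 2 (threshold ε (F fun i => (y i : ℝ))) := by
    have h1 := (locallyLipschitz_threshold (n := r + 1) ε).continuous
    have h2 := hF.continuous
    fun_prop
  let w : C(Fin t → I, EuclideanSpace ℝ (Fin (r + 1))) := ⟨_, hcont⟩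
  have hclose : ∀ y, ‖w y - f.1 y‖ < 1 := fun y => by
    refine lt_of_eq_of_lt (congrArg norm ?_) (hδ' _ (hFu y))
    ext i
    simp [w]
    ring
  have hbd : ∀ y ∈ Cube.boundary (Fin t), w y = f.1 y := fun y hy => by
    have hfx : f.1 y = x := f.2 y hy
    have h0 := hF0 y (by ext i; simp only [ContinuousMap.coe_mk, hfx, sub_self, Pi.zero_apply])
    simp [w, h0, hfx]
  obtain ⟨hw, H1⟩ := exists_homotopicRel_normalize f.1 w hclose _ hbd
  obtain ⟨p, hpx, hpw⟩ := exists_forall_smul_ne h x hF ε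
  have hp0 : ‖p‖ ≠ 0 := norm_ne_zero_iff.2 (by simpa using hpx 0)
  let p' : Metric.sphere (0 : EuclideanSpace ℝ (Fin (r + 1))) 1 :=
    ⟨‖p‖⁻¹ • p, by simp [norm_smul, hp0]⟩
  have hp' : p = ‖p‖ • (p' : EuclideanSpace ℝ (Fin (r + 1))) := by simp [p', smul_smul, hp0]
  refine H1.trans (homotopicRel_const_of_ne _ p' x (fun y hy => ?_) (fun hx => ?_) _
    fun y hy => ?_)
  · refine hpw (‖p‖ * ‖w y‖⁻¹) (fun i => (y i : ℝ)) ?_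
    rw [mul_smul]
    conv_lhs => rw [hp', ← hy]
    rfl
  · exact hpx ‖p‖ (by rw [hx]; exact hp')
  · have hfx : f.1 y = x := f.2 y hy
    ext1
    simp [normalize, hbd y hy, hfx]

end SphereHomotopy

/-- For `t < r`, the `t`-th homotopy group of the `r`-sphere (the unit sphere in
`ℝ^{r+1}`, based at any point) is trivial: it has exactly one element. -/
theorem homotopyGroup_sphere_trivial_of_lt
    (t r : ℕ) (h : t < r)
    (x : Metric.sphere (0 : EuclideanSpace ℝ (Fin (r + 1))) 1) :
    Nat.card (π_ t (Metric.sphere (0 : EuclideanSpace ℝ (Fin (r + 1))) 1) x) = 1 := by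
  rw [Nat.card_eq_one_iff_exists]
  refine ⟨Quotient.mk _ GenLoop.const, fun a => ?_⟩
  induction a using Quotient.inductionOn with
  | _ f => exact Quotient.sound (SphereHomotopy.homotopic_const h x f)
end

section
/- (Auslander–Buchsbaum; unique factorization in regular local rings.) Let R be a commutative Noetherian local domain whose maximal ideal is generated by a regular sequence (a finite sequence x₁, …, x_d of elements of the maximal ideal such that x₁ is a nonzerodivisor on R and each x_{i+1} is a nonzerodivisor on R/(x₁, …, x_i), and (x₁, …, x_d) equals the maximal ideal). Then R is a unique factorization domain. -/
/-!
The proof uses regularity only through the finiteness of projective dimensions.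

If the maximal ideal of a Noetherian local ring is generated by a regular sequence, every finitely
generated module has finite projective dimension (`exists_pdLE_of_regularSequence`); in particular
every ideal does. This last property, `IdealsFinitePD`, is stable under localization, and it is the
hypothesis of the induction on the dimension in `ufm_of_idealsFinitePD`.

When `R` is not a field, `𝔪` contains a prime element `x` (`isDomain_and_exists_prime`): some
nonzerodivisor `x ∈ 𝔪 \ 𝔪²` exists, the maximal ideal of `R/(x)` is a direct summand of `𝔪/x𝔪` and
hence again has finite projective dimension, so `R/(x)` is a domain by induction on the dimension.
By Nagata's lemma it suffices that `A = R[1/x]` is factorial, that is, that each height-one prime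
`P` of `A` is principal. The localizations of `A` at its maximal ideals have smaller dimension than
`R`, so they are factorial by induction and `P` is locally principal, hence projective and
invertible (`projective_of_height_eq_one`, `invertible_of_projective`). Since `P` is the extension
of an ideal of the local ring `R` with a finite free resolution, it is stably free
(`isStablyFree_of_pdLE`). A stably free invertible module is free, so `P` is principal.
-/

open IsLocalRing CategoryTheory
open scoped Pointwise TensorProduct

universe u

/-! ### Projective dimension -/

/-- `pdLE R M n`: the `R`-module `M` has projective dimension at most `n`. -/
def pdLE (R : Type u) [CommRing R] (M : Type u) [AddCommGroup M] [Module R M] (n : ℕ) : Prop :=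
  HasProjectiveDimensionLE (ModuleCat.of R M) n

section pdLE

variable {R : Type u} [CommRing R] {M N F : Type u} [AddCommGroup M] [Module R M]
  [AddCommGroup N] [Module R N] [AddCommGroup F] [Module R F]

lemma pdLE_zero_iff : pdLE R M 0 ↔ Module.Projective R M := by
  rw [pdLE, ← projective_iff_hasProjectiveDimensionLE_zero, ← IsProjective.iff_projective]

lemma pdLE_succ_iff [Module.Projective R F] (f : F →ₗ[R] M) (hf : Function.Surjective f) (n : ℕ) :
    pdLE R M (n + 1) ↔ pdLE R (LinearMap.ker f) n := by
  have hS := LinearMap.shortExact_shortComplexKer hf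
  have hp : CategoryTheory.Projective (ModuleCat.of R F) :=
    (IsProjective.iff_projective F).mp inferInstance
  exact hS.hasProjectiveDimensionLT_X₃_iff n hp

lemma pdLE.of_equiv {n : ℕ} (h : pdLE R M n) (e : M ≃ₗ[R] N) : pdLE R N n :=
  haveI : HasProjectiveDimensionLE (ModuleCat.of R M) n := h
  hasProjectiveDimensionLT_of_iso e.toModuleIso (n + 1)

lemma pdLE.of_retract {n : ℕ} (h : pdLE R N n) (i : M →ₗ[R] N) (p : N →ₗ[R] M)
    (hpi : p ∘ₗ i = LinearMap.id) : pdLE R M n :=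
  haveI : HasProjectiveDimensionLE (ModuleCat.of R N) n := h
  Retract.hasProjectiveDimensionLT (X := ModuleCat.of R M) (Y := ModuleCat.of R N)
    ⟨ModuleCat.ofHom i, ModuleCat.ofHom p, by rw [← ModuleCat.ofHom_comp, hpi]; rfl⟩ (n + 1)

/-- Projective dimension does not increase under localization. The localization is taken in
unbundled form, so that it applies to the extension of an ideal. -/
lemma pdLE.of_isLocalizedModule {n : ℕ} (S : Submonoid R) (A : Type u) [CommRing A] [Algebra R A]
    [IsLocalization S A] {M' : Type u} [AddCommGroup M'] [Module R M'] [Module A M']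
    [IsScalarTower R A M'] (g : M →ₗ[R] M') [IsLocalizedModule S g] (h : pdLE R M n) :
    pdLE A M' n := by
  induction n generalizing M M' with
  | zero =>
    rw [pdLE_zero_iff] at h ⊢
    exact Module.projective_of_isLocalizedModule S g
  | succ n ih =>
    let f : (M →₀ R) →ₗ[R] M := Finsupp.linearCombination R id
    have hf : Function.Surjective f := Finsupp.linearCombination_id_surjective R M
    rw [pdLE_succ_iff f hf] at h
    let l : (M →₀ R) →ₗ[R] (M →₀ A) := Finsupp.mapRange.linearMap (Algebra.linearMap R A)
    let f' : (M →₀ A) →ₗ[R] M' := IsLocalizedModule.map S l g f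
    have hf' : Function.Surjective f' := IsLocalizedModule.map_surjective S l g f hf
    let f'' : (M →₀ A) →ₗ[A] M' := LinearMap.extendScalarsOfIsLocalization S A f'
    rw [pdLE_succ_iff f'' hf']
    let g' : LinearMap.ker f →ₗ[R] LinearMap.ker f'' := LinearMap.toKerIsLocalized S l g f
    have : IsLocalizedModule S g' := LinearMap.toKerLocalized_isLocalizedModule A S l g f
    exact ih g' h

end pdLE

/-! ### Reduction modulo a regular element -/

section Quotient

variable {R : Type u} [CommRing R] {x : R} {N F : Type u} [AddCommGroup N] [Module R N]
  [AddCommGroup F] [Module R F]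

/-- The reduction modulo `x` of an `R`-linear map, as a map of `R/(x)`-modules. -/
noncomputable def quotMap (x : R) (f : F →ₗ[R] N) :
    QuotSMulTop x F →ₗ[R ⧸ Ideal.span {x}] QuotSMulTop x N :=
  (QuotSMulTop.map x f).extendScalarsOfSurjective Ideal.Quotient.mk_surjective

lemma quotMap_mk (f : F →ₗ[R] N) (a : F) :
    quotMap x f (Submodule.Quotient.mk a) = Submodule.Quotient.mk (f a) := rfl

lemma quotMap_surjective {f : F →ₗ[R] N} (hf : Function.Surjective f) :
    Function.Surjective (quotMap x f) := QuotSMulTop.map_surjective x hf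

/-- When `x` is regular on `N`, reduction modulo `x` preserves the exactness of
`0 → ker f → F → N → 0`. -/
lemma exists_quotKerEquiv (f : F →ₗ[R] N) (hf : Function.Surjective f) (hx : IsSMulRegular N x) :
    Nonempty (QuotSMulTop x (LinearMap.ker f) ≃ₗ[R ⧸ Ideal.span {x}]
      LinearMap.ker (quotMap x f)) := by
  let g : QuotSMulTop x (LinearMap.ker f) →ₗ[R ⧸ Ideal.span {x}] LinearMap.ker (quotMap x f) :=
    (quotMap x (LinearMap.ker f).subtype).codRestrict _ fun y => by
      obtain ⟨a, rfl⟩ := Submodule.Quotient.mk_surjective _ y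
      rw [LinearMap.mem_ker, quotMap_mk, quotMap_mk]
      have : f ((LinearMap.ker f).subtype a) = 0 := a.2
      rw [this]; rfl
  refine ⟨LinearEquiv.ofBijective g ⟨?_, ?_⟩⟩
  · rw [injective_iff_map_eq_zero]
    intro y hy
    obtain ⟨a, rfl⟩ := Submodule.Quotient.mk_surjective _ y
    have h1 : (Submodule.Quotient.mk (a : F) : QuotSMulTop x F) = 0 := congrArg Subtype.val hy
    rw [Submodule.Quotient.mk_eq_zero, Submodule.mem_smul_pointwise_iff_exists] at h1
    obtain ⟨w, -, hw⟩ := h1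
    have hw' : f w = 0 := by
      apply hx.right_eq_zero_of_smul
      rw [← map_smul, hw]; exact a.2
    rw [Submodule.Quotient.mk_eq_zero, Submodule.mem_smul_pointwise_iff_exists]
    exact ⟨⟨w, hw'⟩, trivial, Subtype.ext hw⟩
  · rintro ⟨y, hy⟩
    have hex : Function.Exact (LinearMap.ker f).subtype f := LinearMap.exact_subtype_ker_map f
    obtain ⟨z, hz⟩ := (QuotSMulTop.map_exact x hex hf y).mp hy
    exact ⟨z, Subtype.ext hz⟩

/-- Reduction modulo an element regular on both `R` and `N` does not increase the projective
dimension. -/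
lemma pdLE.quotSMulTop {n : ℕ} (hx : IsSMulRegular R x) (hN : IsSMulRegular N x)
    (h : pdLE R N n) : pdLE (R ⧸ Ideal.span {x}) (QuotSMulTop x N) n := by
  induction n generalizing N with
  | zero =>
    rw [pdLE_zero_iff] at h ⊢
    exact Module.Projective.of_equiv ((QuotSMulTop.equivQuotTensor x N).extendScalarsOfSurjective
      Ideal.Quotient.mk_surjective).symm
  | succ n ih =>
    let f : (N →₀ R) →ₗ[R] N := Finsupp.linearCombination R id
    have hf : Function.Surjective f := Finsupp.linearCombination_id_surjective R N
    rw [pdLE_succ_iff f hf] at h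
    rw [pdLE_succ_iff (quotMap x f) (quotMap_surjective hf)]
    refine (ih ?_ h).of_equiv (exists_quotKerEquiv f hf hN).some
    exact IsSMulRegular.of_injective (LinearMap.ker f).subtype Subtype.val_injective
      (IsSMulRegular.finsupp hx)

/-- Over a Noetherian local ring, the projective dimension of a finitely generated module `N` can
be computed after reduction modulo `x ∈ 𝔪` regular on both `R` and `N`. -/
lemma pdLE.of_quotSMulTop [IsLocalRing R] [IsNoetherianRing R] [Module.Finite R N] {n : ℕ}
    (hxm : x ∈ maximalIdeal R) (hx : IsSMulRegular R x) (hN : IsSMulRegular N x)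
    (h : pdLE (R ⧸ Ideal.span {x}) (QuotSMulTop x N) n) : pdLE R N n := by
  have hne : Ideal.span {x} ≠ ⊤ := by
    rw [Ne, Ideal.span_singleton_eq_top]; exact hxm
  have : Nontrivial (R ⧸ Ideal.span {x}) := Ideal.Quotient.nontrivial_iff.mpr hne
  have : IsLocalRing (R ⧸ Ideal.span {x}) :=
    IsLocalRing.of_surjective' (Ideal.Quotient.mk _) Ideal.Quotient.mk_surjective
  induction n generalizing N with
  | zero =>
    rw [pdLE_zero_iff] at h ⊢
    have := Module.Finite.of_restrictScalars_finite R (R ⧸ Ideal.span {x}) (QuotSMulTop x N)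
    have hfree : Module.Free (R ⧸ Ideal.span {x}) (QuotSMulTop x N) :=
      Module.free_of_flat_of_isLocalRing
    have : Module.FinitePresentation R N := Module.finitePresentation_of_finite R N
    have := (Module.free_quotSMulTop_iff_free R N
      (by rwa [IsLocalRing.jacobson_eq_maximalIdeal _ bot_ne_top]) hN).mp hfree
    infer_instance
  | succ n ih =>
    obtain ⟨k, f, hf⟩ := Module.Finite.exists_fin' R N
    rw [pdLE_succ_iff f hf]
    rw [pdLE_succ_iff (quotMap x f) (quotMap_surjective hf)] at h
    exact ih (IsSMulRegular.of_injective (LinearMap.ker f).subtype Subtype.val_injective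
      (IsSMulRegular.pi fun _ => hx)) (h.of_equiv (exists_quotKerEquiv f hf hN).some.symm)

end Quotient

/-! ### Finite projective dimension over local rings -/

section Local

lemma isLocalRing_quotient_span {R : Type u} [CommRing R] [IsLocalRing R] {x : R}
    (hxm : x ∈ maximalIdeal R) : IsLocalRing (R ⧸ Ideal.span {x}) := by
  have hne : Ideal.span {x} ≠ ⊤ := by
    rw [Ne, Ideal.span_singleton_eq_top]; exact hxm
  have : Nontrivial (R ⧸ Ideal.span {x}) := Ideal.Quotient.nontrivial_iff.mpr hne
  exact IsLocalRing.of_surjective' (Ideal.Quotient.mk _) Ideal.Quotient.mk_surjective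

lemma mk_mem_maximalIdeal_iff {R : Type u} [CommRing R] [IsLocalRing R] {x : R}
    [IsLocalRing (R ⧸ Ideal.span {x})] (a : R) :
    Ideal.Quotient.mk (Ideal.span {x}) a ∈ maximalIdeal (R ⧸ Ideal.span {x}) ↔
      a ∈ maximalIdeal R := by
  have := IsLocalHom.of_surjective (Ideal.Quotient.mk (Ideal.span {x}))
    Ideal.Quotient.mk_surjective
  simp [mem_maximalIdeal, mem_nonunits_iff]

/-- Over a Noetherian local ring whose maximal ideal is generated by a regular sequence, every
finitely generated module has finite projective dimension. The induction on the length of the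
sequence replaces a module by its first syzygy, on which the first term `x` is regular, and
compares the projective dimensions of `N` over `R` and of `N/xN` over `R/(x)`. -/
lemma exists_pdLE_of_regularSequence (d : ℕ) : ∀ (R : Type u) [CommRing R] [IsNoetherianRing R]
    [IsLocalRing R] (rs : List R), rs.length = d → (∀ x ∈ rs, x ∈ maximalIdeal R) →
    RingTheory.Sequence.IsWeaklyRegular R rs → Ideal.ofList rs = maximalIdeal R →
    ∀ (M : Type u) [AddCommGroup M] [Module R M] [Module.Finite R M], ∃ n, pdLE R M n := by
  induction d with
  | zero =>
    intro R _ _ _ rs hlen hmem hreg hgen M _ _ _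
    rw [List.length_eq_zero_iff] at hlen
    subst hlen
    rw [Ideal.ofList_nil] at hgen
    let := (isField_iff_maximalIdeal_eq.mpr hgen.symm).toField
    refine ⟨0, pdLE_zero_iff.mpr ?_⟩
    infer_instance
  | succ d ih =>
    intro R _ _ _ rs hlen hmem hreg hgen M _ _ _
    obtain ⟨x, rs, rfl⟩ := List.exists_cons_of_length_eq_add_one hlen
    have hxm : x ∈ maximalIdeal R := hmem x (by simp)
    have := isLocalRing_quotient_span hxm
    rw [RingTheory.Sequence.isWeaklyRegular_cons_iff'] at hreg
    obtain ⟨hx, hrs⟩ := hreg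
    let e : QuotSMulTop x R ≃ₗ[R ⧸ Ideal.span {x}] (R ⧸ Ideal.span {x}) :=
      (Submodule.quotEquivOfEq (x • ⊤ : Submodule R R) (Ideal.span {x}) (by
        rw [← Submodule.ideal_span_singleton_smul]; simp)).extendScalarsOfSurjective
        Ideal.Quotient.mk_surjective
    have hrs' := (e.isWeaklyRegular_congr _).mp hrs
    have key := ih (R ⧸ Ideal.span {x}) (rs.map (Ideal.Quotient.mk _)) (by simpa using hlen)
      (by
        intro y hy
        obtain ⟨a, ha, rfl⟩ := List.mem_map.mp hy
        exact (mk_mem_maximalIdeal_iff a).mpr (hmem a (by simp [ha]))) hrs' (by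
        rw [← Ideal.map_ofList]
        have h1 : (Ideal.ofList (x :: rs)).map (Ideal.Quotient.mk (Ideal.span {x})) =
            (Ideal.ofList rs).map (Ideal.Quotient.mk (Ideal.span {x})) := by
          rw [Ideal.ofList_cons, Ideal.map_sup, Ideal.map_quotient_self, bot_sup_eq]
        rw [← h1, hgen]
        ext b
        obtain ⟨a, rfl⟩ := Ideal.Quotient.mk_surjective b
        rw [mk_mem_maximalIdeal_iff, Ideal.mem_quotient_iff_mem]
        rw [Ideal.span_singleton_le_iff_mem]; exact hxm)
    obtain ⟨k, f, hf⟩ := Module.Finite.exists_fin' R M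
    have hK : IsSMulRegular (LinearMap.ker f) x :=
      IsSMulRegular.of_injective (LinearMap.ker f).subtype Subtype.val_injective
        (IsSMulRegular.pi fun _ => hx)
    have := Module.Finite.of_restrictScalars_finite R (R ⧸ Ideal.span {x})
      (QuotSMulTop x (LinearMap.ker f))
    obtain ⟨n, hn⟩ := key (QuotSMulTop x (LinearMap.ker f))
    exact ⟨n + 1, (pdLE_succ_iff f hf n).mpr (hn.of_quotSMulTop hxm hx hK)⟩

variable {R : Type u} [CommRing R] [IsLocalRing R]

/-- A finitely generated module over a local ring has a free cover by a finite free module whose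
kernel lies in `𝔪 F`. -/
lemma exists_minimal_cover (M : Type u) [AddCommGroup M] [Module R M] [Module.Finite R M] :
    ∃ (k : ℕ) (f : (Fin k → R) →ₗ[R] M), Function.Surjective f ∧
      ∀ z, f z = 0 → ∀ i, z i ∈ maximalIdeal R := by
  let b := Module.finBasis (ResidueField R) (TensorProduct R (ResidueField R) M)
  obtain ⟨v, hv⟩ := (TensorProduct.mk_surjective R M (ResidueField R)
    Ideal.Quotient.mk_surjective).comp_left b
  have hv' : ∀ i, TensorProduct.tmul R (1 : ResidueField R) (v i) = b i := fun i => congrFun hv i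
  refine ⟨_, Fintype.linearCombination R v, ?_, ?_⟩
  · rw [← LinearMap.range_eq_top, Fintype.range_linearCombination]
    exact span_eq_top_of_tmul_eq_basis v b hv'
  · intro z hz i
    have h1 : ∑ i, residue R (z i) • b i = 0 := by
      have := congrArg (TensorProduct.mk R (ResidueField R) M 1) hz
      rw [Fintype.linearCombination_apply, map_sum, map_zero] at this
      rw [← this]
      refine Finset.sum_congr rfl fun i _ => ?_
      rw [map_smul, TensorProduct.mk_apply, hv', ← algebraMap_smul (ResidueField R)]
      rfl
    have h2 := Fintype.linearIndependent_iff.mp b.linearIndependent _ h1 i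
    rwa [residue_eq_zero_iff] at h2

/-- Over a Noetherian local ring of depth zero, finite projective dimension implies freeness. Depth
zero is expressed by a nonzero `y` annihilated by `𝔪`: it kills the syzygy of a minimal cover. -/
lemma free_of_pdLE_of_depth_zero [IsNoetherianRing R] {y : R} (hy0 : y ≠ 0)
    (hy : ∀ a ∈ maximalIdeal R, y * a = 0) (n : ℕ) (M : Type u) [AddCommGroup M] [Module R M]
    [Module.Finite R M] (h : pdLE R M n) : Module.Free R M := by
  induction n generalizing M with
  | zero =>
    rw [pdLE_zero_iff] at h
    exact Module.free_of_flat_of_isLocalRing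
  | succ n ih =>
    obtain ⟨k, f, hf, hker⟩ := exists_minimal_cover (R := R) M
    have hfree := ih (LinearMap.ker f) ((pdLE_succ_iff f hf n).mp h)
    have hann : ∀ z : LinearMap.ker f, y • z = 0 := fun z =>
      Subtype.ext (funext fun i => hy _ (hker z.1 z.2 i))
    have hsub : Subsingleton (LinearMap.ker f) := by
      by_contra hns
      rw [not_subsingleton_iff_nontrivial] at hns
      have := (Module.annihilator_eq_bot (R := R) (M := LinearMap.ker f)).mpr inferInstance
      have hmem : y ∈ Module.annihilator R (LinearMap.ker f) := Module.mem_annihilator.mpr hann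
      rw [this] at hmem
      exact hy0 hmem
    have hinj : Function.Injective f :=
      LinearMap.ker_eq_bot.mp ((Submodule.subsingleton_iff_eq_bot).mp hsub)
    exact Module.Free.of_equiv (LinearEquiv.ofBijective f ⟨hinj, hf⟩)

/-- A Noetherian local ring of depth zero whose maximal ideal has finite projective dimension is
a field. -/
lemma maximalIdeal_eq_bot_of_depth_zero [IsNoetherianRing R] {y : R} (hy0 : y ≠ 0)
    (hy : ∀ a ∈ maximalIdeal R, y * a = 0) {n : ℕ} (h : pdLE R (maximalIdeal R) n) :
    maximalIdeal R = ⊥ := by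
  have hfree := free_of_pdLE_of_depth_zero hy0 hy n (maximalIdeal R) h
  by_contra hne
  have hns : Nontrivial (maximalIdeal R) := Submodule.nontrivial_iff_ne_bot.mpr hne
  have := (Module.annihilator_eq_bot (R := R) (M := maximalIdeal R)).mpr inferInstance
  have hmem : y ∈ Module.annihilator R (maximalIdeal R) :=
    Module.mem_annihilator.mpr fun a => Subtype.ext (hy a a.2)
  rw [this] at hmem
  exact hy0 hmem

/-- If `𝔪` is nonzero of finite projective dimension, then it contains a nonzerodivisor outside
`𝔪²`, by prime avoidance for `𝔪²` and the associated primes of `R`. -/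
lemma exists_regular_notMem_sq [IsNoetherianRing R] {n : ℕ} (h : pdLE R (maximalIdeal R) n)
    (hne : maximalIdeal R ≠ ⊥) :
    ∃ x ∈ maximalIdeal R, x ∉ maximalIdeal R ^ 2 ∧ x ∈ nonZeroDivisors R := by
  classical
  by_contra! hcon
  let s : Finset (Ideal R) := insert (maximalIdeal R ^ 2) (associatedPrimes.finite R R).toFinset
  have hsub : ((maximalIdeal R : Ideal R) : Set R) ⊆ ⋃ I ∈ (s : Set (Ideal R)), (id I : Ideal R) := by
    intro x hx
    simp only [Set.mem_iUnion]
    by_cases hx2 : x ∈ maximalIdeal R ^ 2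
    · exact ⟨_, by simp [s], hx2⟩
    · have h1 : x ∈ ((nonZeroDivisors R : Set R))ᶜ := hcon x hx hx2
      rw [← biUnion_associatedPrimes_eq_compl_nonZeroDivisors] at h1
      simp only [Set.mem_iUnion] at h1
      obtain ⟨p, hp, hxp⟩ := h1
      exact ⟨p, by simp [s, hp], hxp⟩
  rw [Ideal.subset_union_prime (maximalIdeal R ^ 2) (maximalIdeal R ^ 2)] at hsub
  · obtain ⟨I, hI, hle⟩ := hsub
    rcases Finset.mem_insert.mp hI with rfl | hI
    · apply hne
      refine Submodule.eq_bot_of_le_smul_of_le_jacobson_bot (maximalIdeal R) _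
        (IsNoetherian.noetherian _) ?_ (IsLocalRing.maximalIdeal_le_jacobson _)
      rw [smul_eq_mul, ← pow_two]; exact hle
    · rw [Set.Finite.mem_toFinset] at hI
      obtain ⟨hp, y, rfl⟩ := isAssociatedPrime_iff.mp hI
      refine hne (maximalIdeal_eq_bot_of_depth_zero (y := y) ?_ ?_ h)
      · rintro rfl
        exact hp.ne_top (by ext; simp [Submodule.mem_colon_singleton])
      · intro a ha
        have := hle ha
        simpa [Submodule.mem_colon_singleton, mul_comm] using this
  · intro p hp hne1 _
    rcases Finset.mem_insert.mp hp with rfl | hp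
    · exact absurd rfl hne1
    · rw [Set.Finite.mem_toFinset] at hp
      exact hp.isPrime

end Local

/-! ### Stably free and invertible modules -/

section StablyFree

/-- If a finitely generated module of finite projective dimension over a Noetherian local ring
becomes projective after a localization, then it becomes stably free: localizing a finite free
resolution gives a split exact sequence, so the argument goes by induction along syzygies. -/
lemma isStablyFree_of_pdLE {R : Type u} [CommRing R] [IsNoetherianRing R] [IsLocalRing R]
    (S : Submonoid R) (A : Type u) [CommRing A] [Algebra R A] [IsLocalization S A] {n : ℕ}
    {M M' : Type u} [AddCommGroup M] [Module R M] [Module.Finite R M] [AddCommGroup M']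
    [Module R M'] [Module A M'] [IsScalarTower R A M'] (g : M →ₗ[R] M') [IsLocalizedModule S g]
    (h : pdLE R M n) (hM' : Module.Projective A M') : Module.IsStablyFree A M' := by
  induction n generalizing M M' with
  | zero =>
    rw [pdLE_zero_iff] at h
    have : Module.Free R M := Module.free_of_flat_of_isLocalRing
    have : Module.Free A M' := Module.free_of_isLocalizedModule S g
    infer_instance
  | succ n ih =>
    obtain ⟨k, f₀, hf₀⟩ := Module.Finite.exists_fin' R M
    let f : (Fin k →₀ R) →ₗ[R] M := f₀ ∘ₗ (Finsupp.linearEquivFunOnFinite R R (Fin k)).toLinearMap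
    have hf : Function.Surjective f := hf₀.comp (LinearEquiv.surjective _)
    rw [pdLE_succ_iff f hf] at h
    let l : (Fin k →₀ R) →ₗ[R] (Fin k →₀ A) := Finsupp.mapRange.linearMap (Algebra.linearMap R A)
    let f' : (Fin k →₀ A) →ₗ[R] M' := IsLocalizedModule.map S l g f
    have hf' : Function.Surjective f' := IsLocalizedModule.map_surjective S l g f hf
    let f'' : (Fin k →₀ A) →ₗ[A] M' := LinearMap.extendScalarsOfIsLocalization S A f'
    let g' : LinearMap.ker f →ₗ[R] LinearMap.ker f'' := LinearMap.toKerIsLocalized S l g f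
    have : IsLocalizedModule S g' := LinearMap.toKerLocalized_isLocalizedModule A S l g f
    obtain ⟨s, hs⟩ := Module.projective_lifting_property f'' LinearMap.id hf'
    obtain ⟨e, he, -⟩ := Function.Exact.splitSurjectiveEquiv
      (LinearMap.exact_subtype_ker_map f'') (Submodule.subtype_injective _) ⟨s, hs⟩
    have hfr : Module.Free A (Fin k →₀ A) := Module.Free.finsupp A A (Fin k)
    have hpr : Module.Projective A (Fin k →₀ A) := Module.Projective.of_free
    have hK : Module.Projective A (LinearMap.ker f'') :=
      Module.Projective.of_split (e.symm.toLinearMap ∘ₗ LinearMap.inl A _ _)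
        (LinearMap.fst A _ _ ∘ₗ e.toLinearMap) (by ext; simp)
    have hKfin : Module.Finite A (LinearMap.ker f'') :=
      Module.Finite.of_surjective (LinearMap.fst A _ _ ∘ₗ e.toLinearMap)
        (Prod.fst_surjective.comp e.surjective)
    have hst := ih (M := LinearMap.ker f) (M' := LinearMap.ker f'') g' h hK
    obtain ⟨N, _, _, _, _, _⟩ := Module.IsStablyFree.exist_free_prod A (LinearMap.ker f'')
    have : Module.Free A (M' × (LinearMap.ker f'' × N)) :=
      Module.Free.of_equiv ((e.prodCongr (LinearEquiv.refl A N)).trans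
        (((LinearEquiv.prodComm A _ _).prodCongr (LinearEquiv.refl A N)).trans
          (LinearEquiv.prodAssoc A _ _ _)))
    exact Module.IsStablyFree.of_free_prod (M := M') (N := LinearMap.ker f'' × N) (R := A)

/-- A nonzero projective ideal of a domain is an invertible module. -/
lemma invertible_of_projective {A : Type u} [CommRing A] [IsDomain A] (I : Ideal A) (hI : I ≠ ⊥)
    [hproj : Module.Projective A I] : Module.Invertible A I := by
  have := Submodule.nontrivial_iff_ne_bot.mpr hI
  obtain ⟨a, ha0⟩ := exists_ne (0 : I)
  -- every functional on an ideal is symmetric in this sense, both sides being `f (x * y)`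
  have hsymm : ∀ (f : Module.Dual A I) (x y : I), f x • y = f y • x := by
    intro f x y
    apply Subtype.ext
    have ha' : (a : A) ≠ 0 := fun h => ha0 (Subtype.ext h)
    have hx : (a : A) * f x = x * f a := by
      rw [← smul_eq_mul, ← map_smul, ← smul_eq_mul, ← map_smul]
      exact congrArg f (Subtype.ext (mul_comm _ _))
    have hy : (a : A) * f y = y * f a := by
      rw [← smul_eq_mul, ← map_smul, ← smul_eq_mul, ← map_smul]
      exact congrArg f (Subtype.ext (mul_comm _ _))
    apply mul_left_cancel₀ ha'
    simp only [Submodule.coe_smul, smul_eq_mul]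
    linear_combination (y : A) * hx - (x : A) * hy
  let c := contractLeft A I
  have hcomm : ∀ t t' : Module.Dual A I ⊗[A] I, c t' • t = c t • t' := by
    intro t t'
    induction t with
    | zero => simp
    | add t₁ t₂ h₁ h₂ => rw [smul_add, h₁, h₂, map_add, add_smul]
    | tmul f x =>
      induction t' with
      | zero => simp
      | add t₁ t₂ h₁ h₂ => rw [smul_add, ← h₁, ← h₂, map_add, add_smul]
      | tmul g y =>
        have h1 : g x • f = f x • g := by
          ext z
          have h := congrArg g (hsymm f x z)
          simp only [map_smul, smul_eq_mul] at h
          simp only [LinearMap.smul_apply, smul_eq_mul]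
          rw [h, mul_comm]
        simp only [c, contractLeft_apply]
        rw [← TensorProduct.tmul_smul, hsymm g y x, TensorProduct.tmul_smul,
          TensorProduct.smul_tmul', h1, ← TensorProduct.smul_tmul']
  have hone : ∃ t, c t = 1 := by
    obtain ⟨s, hs⟩ := hproj.out
    let F : I → Module.Dual A I := fun x => Finsupp.lapply x ∘ₗ s
    refine ⟨∑ x ∈ (s a).support, F x ⊗ₜ x, ?_⟩
    have h1 := hs a
    rw [Finsupp.linearCombination_apply, Finsupp.sum] at h1
    have h2 : (∑ x ∈ (s a).support, F x x) • a = a := by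
      conv_rhs => rw [← h1]
      rw [Finset.sum_smul]
      exact Finset.sum_congr rfl fun x _ => hsymm (F x) x a
    have h3 : c (∑ x ∈ (s a).support, F x ⊗ₜ x) = ∑ x ∈ (s a).support, F x x := by
      simp [c]
    rw [h3]
    exact smul_left_injective A ha0 (h2.trans (one_smul A a).symm)
  obtain ⟨t₁, ht₁⟩ := hone
  refine ⟨fun t t' htt => ?_, fun r => ⟨r • t₁, ?_⟩⟩
  · have h := hcomm t t₁
    rw [ht₁, one_smul] at h
    have h' := hcomm t' t₁
    rw [ht₁, one_smul] at h'
    rw [h, h']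
    exact congrArg (· • t₁) htt
  · change c (r • t₁) = r
    rw [map_smul, ht₁, smul_eq_mul, mul_one]

end StablyFree

/-! ### Descent of finite projective dimension of the maximal ideal -/

section Quotient

variable {R : Type u} [CommRing R] [IsLocalRing R]

/-- A functional `𝔪 → R/𝔪` taking the value `1` on a given element of `𝔪 \ 𝔪²`. -/
lemma exists_functional [IsNoetherianRing R] {x : R} (hxm : x ∈ maximalIdeal R)
    (hx2 : x ∉ maximalIdeal R ^ 2) :
    ∃ φ : maximalIdeal R →ₗ[R] ResidueField R, φ ⟨x, hxm⟩ = 1 := by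
  have hne : (maximalIdeal R).toCotangent ⟨x, hxm⟩ ≠ 0 := by
    rw [Ne, Ideal.toCotangent_eq_zero]; exact hx2
  obtain ⟨ψ, hψ⟩ : ∃ ψ : Module.Dual (ResidueField R) (CotangentSpace R),
      ψ ((maximalIdeal R).toCotangent ⟨x, hxm⟩) ≠ 0 := by
    by_contra! hcon
    exact hne ((Module.forall_dual_apply_eq_zero_iff (ResidueField R) _).mp hcon)
  refine ⟨((ψ (((maximalIdeal R).toCotangent ⟨x, hxm⟩)))⁻¹ • ψ).restrictScalars R ∘ₗ
    (maximalIdeal R).toCotangent, ?_⟩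
  simp [hψ]

/-- For `x ∈ 𝔪 \ 𝔪²` regular, the maximal ideal of `R/(x)` is a direct summand of `𝔪/x𝔪`, so
finiteness of the projective dimension of the maximal ideal descends to `R/(x)`. -/
lemma pdLE.maximalIdeal_quotient [IsNoetherianRing R] {x : R} (hxm : x ∈ maximalIdeal R)
    (hx2 : x ∉ maximalIdeal R ^ 2) (hx : x ∈ nonZeroDivisors R) {n : ℕ}
    (h : pdLE R (maximalIdeal R) n) [IsLocalRing (R ⧸ Ideal.span {x})] :
    pdLE (R ⧸ Ideal.span {x}) (maximalIdeal (R ⧸ Ideal.span {x})) n := by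
  have hxr : IsSMulRegular R x := by
    intro a b hab
    exact (mul_cancel_left_mem_nonZeroDivisors hx).mp hab
  have hxm' : IsSMulRegular (maximalIdeal R) x :=
    IsSMulRegular.of_injective (maximalIdeal R).subtype Subtype.val_injective hxr
  have hq := h.quotSMulTop hxr hxm'
  obtain ⟨φ, hφ⟩ := exists_functional hxm hx2
  let q : maximalIdeal R →ₗ[R] maximalIdeal (R ⧸ Ideal.span {x}) :=
    { toFun := fun a => ⟨Ideal.Quotient.mk _ a, (mk_mem_maximalIdeal_iff _).mpr a.2⟩
      map_add' := fun a b => Subtype.ext (map_add _ _ _)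
      map_smul' := fun a b => Subtype.ext (map_mul _ _ _) }
  have hqs : Function.Surjective q := by
    rintro ⟨b, hb⟩
    obtain ⟨a, rfl⟩ := Ideal.Quotient.mk_surjective b
    exact ⟨⟨a, (mk_mem_maximalIdeal_iff _).mp hb⟩, rfl⟩
  have hqk : ∀ a, q a = 0 → ∃ r : R, a = r • (⟨x, hxm⟩ : maximalIdeal R) := by
    intro a ha
    have h1 : Ideal.Quotient.mk (Ideal.span {x}) (a : R) = 0 := congrArg Subtype.val ha
    rw [Ideal.Quotient.eq_zero_iff_mem, Ideal.mem_span_singleton'] at h1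
    obtain ⟨r, hr⟩ := h1
    exact ⟨r, Subtype.ext hr.symm⟩
  have hqx : q ⟨x, hxm⟩ = 0 := Subtype.ext
    (Ideal.Quotient.eq_zero_iff_mem.mpr (Ideal.mem_span_singleton_self x))
  have hmk : ∀ b : maximalIdeal R,
      (x • ⊤ : Submodule R (maximalIdeal R)).mkQ (x • b) = 0 := fun b => by
    rw [Submodule.mkQ_apply, Submodule.Quotient.mk_eq_zero]
    exact Submodule.smul_mem_pointwise_smul b x ⊤ trivial
  let π : QuotSMulTop x (maximalIdeal R) →ₗ[R] maximalIdeal (R ⧸ Ideal.span {x}) :=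
    Submodule.liftQ _ q (by
      rintro _ ⟨b, -, rfl⟩
      change q (x • b) = 0
      have : x • b = (b : R) • (⟨x, hxm⟩ : maximalIdeal R) := Subtype.ext (mul_comm _ _)
      rw [this, map_smul, hqx, smul_zero])
  let θ : ResidueField R →ₗ[R] QuotSMulTop x (maximalIdeal R) :=
    Submodule.liftQ (maximalIdeal R) (LinearMap.toSpanSingleton R _
      (Submodule.mkQ (x • ⊤ : Submodule R (maximalIdeal R)) ⟨x, hxm⟩)) (by
      intro a ha
      rw [LinearMap.mem_ker, LinearMap.toSpanSingleton_apply, ← map_smul]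
      have : a • (⟨x, hxm⟩ : maximalIdeal R) = x • ⟨a, ha⟩ := Subtype.ext (mul_comm _ _)
      rw [this, hmk])
  have hθ : θ 1 = Submodule.mkQ (x • ⊤ : Submodule R (maximalIdeal R)) ⟨x, hxm⟩ :=
    (Submodule.liftQ_apply _ _ (1 : R)).trans (one_smul R _)
  let ψ : maximalIdeal R →ₗ[R] QuotSMulTop x (maximalIdeal R) := Submodule.mkQ _ - θ ∘ₗ φ
  have hψx : ψ ⟨x, hxm⟩ = 0 := by
    change Submodule.mkQ _ _ - θ (φ _) = 0
    rw [hφ, hθ, sub_self]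
  have hψk : LinearMap.ker q ≤ LinearMap.ker ψ := by
    intro a ha
    obtain ⟨r, rfl⟩ := hqk a ha
    rw [LinearMap.mem_ker, map_smul, hψx, smul_zero]
  let i : maximalIdeal (R ⧸ Ideal.span {x}) →ₗ[R] QuotSMulTop x (maximalIdeal R) :=
    (LinearMap.ker q).liftQ ψ hψk ∘ₗ (q.quotKerEquivOfSurjective hqs).symm.toLinearMap
  have hi : ∀ a, i (q a) = ψ a := by
    intro a
    have : (q.quotKerEquivOfSurjective hqs).symm (q a) = Submodule.Quotient.mk a := by
      rw [LinearEquiv.symm_apply_eq]; rfl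
    change (LinearMap.ker q).liftQ ψ hψk ((q.quotKerEquivOfSurjective hqs).symm (q a)) = _
    rw [this]; rfl
  have hπψ : ∀ a, π (ψ a) = q a := by
    intro a
    have h1 : π (θ (φ a)) = 0 := by
      obtain ⟨r, hr⟩ := Ideal.Quotient.mk_surjective (φ a)
      have h2 : φ a = r • (1 : ResidueField R) := by
        rw [← hr, Algebra.smul_def, mul_one]; rfl
      rw [h2, map_smul, map_smul, hθ]
      have : π (Submodule.mkQ (x • ⊤ : Submodule R (maximalIdeal R)) ⟨x, hxm⟩) = q ⟨x, hxm⟩ := rfl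
      rw [this, hqx, smul_zero]
    change π (Submodule.mkQ _ a - θ (φ a)) = q a
    rw [map_sub, h1, sub_zero]; rfl
  refine hq.of_retract (i.extendScalarsOfSurjective Ideal.Quotient.mk_surjective)
    (π.extendScalarsOfSurjective Ideal.Quotient.mk_surjective) ?_
  ext b : 1
  obtain ⟨a, rfl⟩ := hqs b
  change π (i (q a)) = q a
  rw [hi, hπψ]

end Quotient

/-! ### Existence of a prime element in the maximal ideal -/

section Domain

/-- A Noetherian local ring with a nonzerodivisor `x ∈ 𝔪` generating a prime ideal is a domain:
a minimal prime `q ≤ (x)` satisfies `q = x q`, hence vanishes by Nakayama's lemma. -/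
lemma isDomain_of_span_isPrime {R : Type u} [CommRing R] [IsNoetherianRing R] [IsLocalRing R]
    {x : R} (hxm : x ∈ maximalIdeal R) (hx : x ∈ nonZeroDivisors R)
    (hp : (Ideal.span {x}).IsPrime) : IsDomain R := by
  obtain ⟨q, hq, hqx⟩ := Ideal.exists_minimalPrimes_le (I := ⊥) (J := Ideal.span {x}) bot_le
  have hqp : q.IsPrime := hq.isPrime
  have hxq : x ∉ q := fun h =>
    Set.disjoint_left.mp (Ideal.disjoint_nonZeroDivisors_of_mem_minimalPrimes hq) h hx
  have hbot : q = ⊥ := by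
    refine Submodule.eq_bot_of_le_smul_of_le_jacobson_bot (maximalIdeal R) q
      (IsNoetherian.noetherian _) ?_ (IsLocalRing.maximalIdeal_le_jacobson _)
    intro a ha
    obtain ⟨b, rfl⟩ := Ideal.mem_span_singleton'.mp (hqx ha)
    have hb : b ∈ q := (hqp.mem_or_mem ha).resolve_right hxq
    rw [mul_comm]
    exact Submodule.smul_mem_smul hxm hb
  have : (⊥ : Ideal R).IsPrime := hbot ▸ hqp
  exact IsDomain.of_bot_isPrime R

/-- A Noetherian local ring whose maximal ideal has finite projective dimension is a domain, and
unless it is a field its maximal ideal contains a prime element. -/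
lemma isDomain_and_exists_prime (n : ℕ) : ∀ (R : Type u) [CommRing R] [IsNoetherianRing R]
    [IsLocalRing R], (maximalIdeal R).height < n → (∃ k, pdLE R (maximalIdeal R) k) →
    IsDomain R ∧ (maximalIdeal R = ⊥ ∨ ∃ x ∈ maximalIdeal R, Prime x) := by
  induction n with
  | zero => intro R _ _ _ h; exact absurd h (by simp)
  | succ n ih =>
    intro R _ _ _ hn ⟨k, hk⟩
    by_cases hbot : maximalIdeal R = ⊥
    · exact ⟨(isField_iff_maximalIdeal_eq.mpr hbot).isDomain, Or.inl hbot⟩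
    obtain ⟨x, hxm, hx2, hx⟩ := exists_regular_notMem_sq hk hbot
    have := isLocalRing_quotient_span hxm
    have hdim : (maximalIdeal (R ⧸ Ideal.span {x})).height < (n : ℕ∞) := by
      have h1 := ringKrullDim_quotient_succ_le_of_nonZeroDivisor hx
      rw [← maximalIdeal_height_eq_ringKrullDim, ← maximalIdeal_height_eq_ringKrullDim] at h1
      have h2 : (maximalIdeal (R ⧸ Ideal.span {x})).height + 1 ≤ (maximalIdeal R).height := by
        exact_mod_cast h1
      have h3 := h2.trans_lt hn
      push_cast at h3
      exact lt_of_add_lt_add_right h3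
    obtain ⟨hdom, -⟩ := ih _ hdim ⟨k, hk.maximalIdeal_quotient hxm hx2 hx⟩
    have hprime : (Ideal.span {x}).IsPrime := (Ideal.Quotient.isDomain_iff_prime _).mp hdom
    have hR := isDomain_of_span_isPrime hxm hx hprime
    refine ⟨hR, Or.inr ⟨x, hxm, ?_⟩⟩
    exact (Ideal.span_singleton_prime (nonZeroDivisors.ne_zero hx)).mp hprime

end Domain

/-! ### Factoriality -/

section Factorial

/-- Every ideal of `A` has finite projective dimension. Unlike the existence of a regular sequence
generating the maximal ideal, this visibly passes to localizations. -/
def IdealsFinitePD (A : Type u) [CommRing A] : Prop := ∀ I : Ideal A, ∃ n, pdLE A I n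

lemma IdealsFinitePD.of_isLocalization {R : Type u} [CommRing R] (h : IdealsFinitePD R)
    (S : Submonoid R) (A : Type u) [CommRing A] [Algebra R A] [IsLocalization S A] :
    IdealsFinitePD A := by
  intro J
  obtain ⟨n, hn⟩ := h (J.under R)
  have hJ : (J.under R).map (algebraMap R A) = J := IsLocalization.map_under S A J
  have := hn.of_isLocalizedModule S A (Algebra.idealMap (J.under R) (S := A))
  rw [hJ] at this
  exact ⟨n, this⟩

lemma projective_of_isPrincipal {A : Type u} [CommRing A] [IsDomain A] (I : Ideal A)
    (h : I.IsPrincipal) : Module.Projective A I := by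
  obtain ⟨a, rfl⟩ := h
  by_cases ha : a = 0
  · subst ha
    have : Subsingleton (Submodule.span A {(0 : A)}) :=
      Submodule.subsingleton_iff_eq_bot.mpr (by simp)
    infer_instance
  · exact Module.Projective.of_equiv (LinearEquiv.toSpanNonzeroSingleton A A a ha)

lemma isPrincipal_of_linearEquiv {A : Type u} [CommRing A] (I : Ideal A) (e : I ≃ₗ[A] A) :
    I.IsPrincipal := by
  refine ⟨(e.symm 1 : A), le_antisymm (fun a ha => ?_) ?_⟩
  · rw [Submodule.mem_span_singleton]
    refine ⟨e ⟨a, ha⟩, ?_⟩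
    rw [← Submodule.coe_smul, ← map_smul, smul_eq_mul, mul_one, e.symm_apply_apply]
  · rw [Submodule.span_singleton_le_iff_mem]; exact (e.symm 1).2

/-- If all localizations of a Noetherian domain at maximal ideals are factorial, its height-one
primes are projective. -/
lemma projective_of_height_eq_one {A : Type u} [CommRing A] [IsDomain A] [IsNoetherianRing A]
    (hloc : ∀ (Q : Ideal A) [Q.IsMaximal], UniqueFactorizationMonoid (Localization.AtPrime Q))
    (P : Ideal A) [P.IsPrime] (hP : P.height = 1) : Module.Projective A P := by
  have : Module.FinitePresentation A P := Module.finitePresentation_of_finite A P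
  refine Module.projective_of_localization_maximal' (R := A) (M := P)
    (fun Q _ => Localization.AtPrime Q)
    (fun Q _ => P.map (algebraMap A (Localization.AtPrime Q)))
    (fun Q _ => Algebra.idealMap P (S := Localization.AtPrime Q))
    (inst := fun Q _ => Algebra.idealMap_isLocalizedModule
      (Localization.AtPrime Q) Q.primeCompl P) ?_
  intro Q hQ
  have := hloc Q
  have : IsDomain (Localization.AtPrime Q) :=
    IsLocalization.isDomain_of_le_nonZeroDivisors _ Q.primeCompl_le_nonZeroDivisors
  apply projective_of_isPrincipal
  by_cases hle : P ≤ Q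
  · have hd : Disjoint (Q.primeCompl : Set A) (P : Set A) :=
      Set.disjoint_left.mpr fun a ha haP => ha (hle haP)
    have := IsLocalization.isPrime_of_isPrime_disjoint Q.primeCompl (Localization.AtPrime Q) P
      inferInstance hd
    apply UniqueFactorizationMonoid.isPrincipal_of_height_eq_one
    rw [IsLocalization.height_map_of_disjoint Q.primeCompl P hd, hP]
  · obtain ⟨a, haP, haQ⟩ := SetLike.not_le_iff_exists.mp hle
    have : P.map (algebraMap A (Localization.AtPrime Q)) = ⊤ :=
      Ideal.eq_top_of_isUnit_mem _ (Ideal.mem_map_of_mem _ haP)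
        (IsLocalization.map_units (Localization.AtPrime Q) (⟨a, haQ⟩ : Q.primeCompl))
    rw [this]
    exact ⟨1, by simp⟩

/-- Induction on the dimension. Inverting a prime `x ∈ 𝔪` lowers the dimension, so the height-one
primes of `R[1/x]` are locally principal, hence projective; they are also stably free, hence free
of rank one, that is, principal. Nagata's lemma transfers factoriality back to `R`. -/
lemma ufm_of_idealsFinitePD (n : ℕ) : ∀ (R : Type u) [CommRing R] [IsNoetherianRing R]
    [IsLocalRing R] [IsDomain R], (maximalIdeal R).height < n → IdealsFinitePD R →
    UniqueFactorizationMonoid R := by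
  induction n with
  | zero => intro R _ _ _ _ h; exact absurd h (by simp)
  | succ n ih =>
    intro R _ _ _ _ hn hR
    obtain ⟨-, hbot | ⟨x, hxm, hx⟩⟩ := isDomain_and_exists_prime (n + 1) R hn (hR _)
    · let := (isField_iff_maximalIdeal_eq.mpr hbot).toField
      infer_instance
    rw [UniqueFactorizationMonoid.iff_localizationAway_of_prime hx]
    have hA : IsDomain (Localization.Away x) := IsLocalization.Away.isDomain _ hx.ne_zero
    have hAN : IsNoetherianRing (Localization.Away x) :=
      IsLocalization.isNoetherianRing (Submonoid.powers x) _ inferInstance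
    have hAG : IdealsFinitePD (Localization.Away x) :=
      hR.of_isLocalization (Submonoid.powers x) _
    have hloc : ∀ (Q : Ideal (Localization.Away x)) [Q.IsMaximal],
        UniqueFactorizationMonoid (Localization.AtPrime Q) := by
      intro Q _
      have : IsDomain (Localization.AtPrime Q) :=
        IsLocalization.isDomain_of_le_nonZeroDivisors _ Q.primeCompl_le_nonZeroDivisors
      have : IsNoetherianRing (Localization.AtPrime Q) :=
        IsLocalization.isNoetherianRing Q.primeCompl _ inferInstance
      refine ih _ ?_ (hAG.of_isLocalization Q.primeCompl _)
      rw [← IsLocalization.height_under Q.primeCompl (maximalIdeal (Localization.AtPrime Q)),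
        Localization.AtPrime.under_maximalIdeal, ← IsLocalization.height_under
          (Submonoid.powers x) Q]
      have hxQ : x ∉ Q.under R := fun h =>
        Ideal.IsPrime.ne_top (I := Q) inferInstance (Ideal.eq_top_of_isUnit_mem _ h
          (IsLocalization.Away.algebraMap_isUnit x))
      have hlt : Q.under R < maximalIdeal R :=
        lt_of_le_of_ne (le_maximalIdeal Ideal.IsPrime.ne_top') fun h => hxQ (h ▸ hxm)
      refine (Ideal.height_strict_mono_of_isPrime_of_isPrime hlt).trans_le ?_
      push_cast at hn
      exact Order.le_of_lt_add_one hn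
    refine UniqueFactorizationMonoid.of_forall_isPrincipal_of_height_eq_one fun P _ hP => ?_
    have hproj := projective_of_height_eq_one hloc P hP
    have hinv := invertible_of_projective P (P.ne_bot_of_height_eq_one hP)
    obtain ⟨k, hk⟩ := hR (P.under R)
    have hst : Module.IsStablyFree (Localization.Away x) P := by
      have hPmap : (P.under R).map (algebraMap R (Localization.Away x)) = P :=
        IsLocalization.map_under (Submonoid.powers x) _ P
      have := isStablyFree_of_pdLE (Submonoid.powers x) (Localization.Away x)
        (Algebra.idealMap (P.under R) (S := Localization.Away x)) hk
      rw [hPmap] at this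
      exact this hproj
    have hfree := Module.free_of_isStablyFree_of_invertible (Localization.Away x) P
    obtain ⟨e⟩ := Module.Invertible.free_iff_linearEquiv.mp hfree
    exact isPrincipal_of_linearEquiv P e

end Factorial

/-- Auslander–Buchsbaum: a commutative Noetherian local domain whose maximal ideal is
generated by a regular sequence (i.e. a regular local ring) is a unique factorization
domain. -/
theorem auslander_buchsbaum_ufd
    (R : Type*) [CommRing R] [IsDomain R] [IsNoetherianRing R] [IsLocalRing R]
    (hreg : ∃ rs : List R,
      (∀ x ∈ rs, x ∈ IsLocalRing.maximalIdeal R) ∧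
      RingTheory.Sequence.IsWeaklyRegular R rs ∧
      Ideal.ofList rs = IsLocalRing.maximalIdeal R) :
    UniqueFactorizationMonoid R := by
  obtain ⟨rs, hmem, hrs, hgen⟩ := hreg
  have hlt : (maximalIdeal R).height < ⊤ := Ideal.height_lt_top_of_isPrime
  obtain ⟨n, hn⟩ := ENat.ne_top_iff_exists.mp hlt.ne
  refine ufm_of_idealsFinitePD (n + 1) R ?_ fun I =>
    exists_pdLE_of_regularSequence _ R rs rfl hmem hrs hgen I
  rw [← hn]
  exact_mod_cast n.lt_succ_self
end
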